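/- arXiv:math/0208139 — 4 statements merged into one kernel-verified Lean document; each statement's English description precedes it below -/
import Mathlib

section
/- If Re(s) ≥ 0, then Re(s)·‖w‖² + (1/R)·‖Dw‖² ≤ ‖w‖² + ‖w‖·‖H‖. -/
open MeasureTheory Complex

noncomputable section

/-- Partial derivative in the first (x) variable. -/
def pdx (f : ℝ → ℝ → ℂ) : ℝ → ℝ → ℂ := fun x y => deriv (fun x' => f x' y) x

/-- Partial derivative in the second (y) variable. -/
def pdy (f : ℝ → ℝ → ℂ) : ℝ → ℝ → ℂ := fun x y => deriv (fun y' => f x y') y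

/-- Laplacian in the space variables. -/
def lap (f : ℝ → ℝ → ℂ) : ℝ → ℝ → ℂ := fun x y => pdx (pdx f) x y + pdy (pdy f) x y

/-- Square of the L² norm over Ω = [0,1] × [0,1]. -/
def nsq (f : ℝ → ℝ → ℂ) : ℝ := ∫ x in (0:ℝ)..(1:ℝ), ∫ y in (0:ℝ)..(1:ℝ), ‖f x y‖ ^ 2

/-- Smoothness of a function of two real variables. -/
def SmoothFn (f : ℝ → ℝ → ℂ) : Prop := ContDiff ℝ (⊤ : ℕ∞) (fun q : ℝ × ℝ => f q.1 q.2)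

/-- 1-periodicity in the first variable. -/
def PeriodicX (f : ℝ → ℝ → ℂ) : Prop := ∀ x y, f (x + 1) y = f x y

/-!
Pair the two momentum equations with `u` and `v` in the real `L²` inner product over the unit
square and integrate by parts. Periodicity in `x` and the no-slip condition in `y` remove all
boundary terms: transport by the shear is skew-symmetric, the Laplacian contributes `-‖Dw‖²`, and
the pressure gradient is orthogonal to the divergence-free field `w`. With `ν = 1 / R`, what remains
is the energy identity `Re s ‖w‖² + ν ‖Dw‖² = Re ⟨w, H⟩ - Re ⟨u, v⟩`, whose right-hand side is
bounded by Cauchy–Schwarz and by `-2 Re ⟨u, v⟩ ≤ ‖u‖² + ‖v‖²`.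
-/

open Function (uncurry)
open scoped InnerProductSpace

section L2Inner

variable {E : Type*} [NormedAddCommGroup E] [InnerProductSpace ℝ E] {f g h : ℝ → ℝ → E}

/-- The real `L²` inner product over the unit square. For complex-valued functions it is the real
part `Re ⟨f, g⟩` of the Hermitian one. It is an iterated integral, as in `nsq`. -/
def l2Inner (f g : ℝ → ℝ → E) : ℝ :=
  ∫ x in (0 : ℝ)..1, ∫ y in (0 : ℝ)..1, ⟪f x y, g x y⟫_ℝ

lemma nsq_eq_l2Inner_self (f : ℝ → ℝ → ℂ) : nsq f = l2Inner f f := by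
  simp only [nsq, l2Inner, real_inner_self_eq_norm_sq]

lemma l2Inner_self_nonneg (f : ℝ → ℝ → E) : 0 ≤ l2Inner f f :=
  intervalIntegral.integral_nonneg zero_le_one fun _ _ ↦
    intervalIntegral.integral_nonneg zero_le_one fun _ _ ↦ real_inner_self_nonneg

lemma nsq_nonneg (f : ℝ → ℝ → ℂ) : 0 ≤ nsq f :=
  (l2Inner_self_nonneg f).trans_eq (nsq_eq_l2Inner_self f).symm

lemma l2Inner_comm (f g : ℝ → ℝ → E) : l2Inner f g = l2Inner g f := by
  simp only [l2Inner, real_inner_comm]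

lemma l2Inner_congr_right
    (hgh : ∀ x ∈ Set.Icc (0 : ℝ) 1, ∀ y ∈ Set.Icc (0 : ℝ) 1, g x y = h x y) :
    l2Inner f g = l2Inner f h := by
  refine intervalIntegral.integral_congr fun x hx ↦ intervalIntegral.integral_congr fun y hy ↦ ?_
  rw [Set.uIcc_of_le zero_le_one] at hx hy
  simp only [hgh x hx y hy]

lemma l2Inner_smul_right (c : ℝ) (f g : ℝ → ℝ → E) :
    l2Inner f (c • g) = c * l2Inner f g := by
  simp [l2Inner, real_inner_smul_right]

lemma l2Inner_add_right (hf : Continuous (uncurry f)) (hg : Continuous (uncurry g))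
    (hh : Continuous (uncurry h)) : l2Inner f (g + h) = l2Inner f g + l2Inner f h := by
  have hfg : Continuous (uncurry fun x y ↦ ⟪f x y, g x y⟫_ℝ) := hf.inner hg
  have hfh : Continuous (uncurry fun x y ↦ ⟪f x y, h x y⟫_ℝ) := hf.inner hh
  simp only [l2Inner, Pi.add_apply, inner_add_right]
  rw [← intervalIntegral.integral_add (Continuous.intervalIntegrable (by fun_prop) _ _)
    (Continuous.intervalIntegrable (by fun_prop) _ _)]
  congr 1 with x
  exact intervalIntegral.integral_add ((hfg.uncurry_left x).intervalIntegrable _ _)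
    ((hfh.uncurry_left x).intervalIntegrable _ _)

lemma l2Inner_swap (hf : Continuous (uncurry f)) (hg : Continuous (uncurry g)) :
    l2Inner f g = ∫ y in (0 : ℝ)..1, ∫ x in (0 : ℝ)..1, ⟪f x y, g x y⟫_ℝ := by
  refine intervalIntegral_intervalIntegral_swap (IntegrableOn.mono_set ?_
    (Set.prod_mono Set.uIoc_subset_uIcc Set.uIoc_subset_uIcc))
  exact (hf.inner hg).continuousOn.integrableOn_compact (isCompact_uIcc.prod isCompact_uIcc)

lemma l2Inner_smul_add_self (hf : Continuous (uncurry f)) (hg : Continuous (uncurry g)) (t : ℝ) :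
    l2Inner (t • f + g) (t • f + g)
      = l2Inner f f * (t * t) + 2 * l2Inner f g * t + l2Inner g g := by
  have htf : Continuous (uncurry (t • f)) := hf.const_smul t
  have hsum : Continuous (uncurry (t • f + g)) := htf.add hg
  rw [l2Inner_add_right hsum htf hg, l2Inner_smul_right, l2Inner_comm _ f, l2Inner_comm _ g,
    l2Inner_add_right hf htf hg, l2Inner_add_right hg htf hg, l2Inner_smul_right,
    l2Inner_smul_right, l2Inner_comm g f]
  ring

lemma l2Inner_le_sqrt_mul_sqrt (hf : Continuous (uncurry f)) (hg : Continuous (uncurry g)) :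
    l2Inner f g ≤ √(l2Inner f f) * √(l2Inner g g) := by
  have hdiscrim : discrim (l2Inner f f) (2 * l2Inner f g) (l2Inner g g) ≤ 0 :=
    discrim_le_zero fun t ↦ l2Inner_smul_add_self hf hg t ▸ l2Inner_self_nonneg _
  rw [← Real.sqrt_mul (l2Inner_self_nonneg f)]
  refine Real.le_sqrt_of_sq_le ?_
  rw [discrim] at hdiscrim
  linarith

lemma neg_two_mul_l2Inner_le (hf : Continuous (uncurry f)) (hg : Continuous (uncurry g)) :
    -(2 * l2Inner f g) ≤ l2Inner f f + l2Inner g g := by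
  have hnonneg := l2Inner_self_nonneg ((1 : ℝ) • f + g)
  rw [l2Inner_smul_add_self hf hg] at hnonneg
  linarith

end L2Inner

lemma l2Inner_add_le_sqrt_mul_sqrt {u v F G : ℝ → ℝ → ℂ} (hu : Continuous (uncurry u))
    (hv : Continuous (uncurry v)) (hF : Continuous (uncurry F)) (hG : Continuous (uncurry G)) :
    l2Inner u F + l2Inner v G ≤ √(nsq u + nsq v) * √(nsq F + nsq G) := by
  have hplane := Real.sum_sqrt_mul_sqrt_le (f := ![nsq u, nsq v]) (g := ![nsq F, nsq G])
    Finset.univ (by simp [Fin.forall_fin_two, nsq_nonneg])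
    (by simp [Fin.forall_fin_two, nsq_nonneg])
  simp only [Fin.sum_univ_two, Matrix.cons_val_zero, Matrix.cons_val_one] at hplane
  refine le_trans (add_le_add ?_ ?_) hplane
  · simpa only [nsq_eq_l2Inner_self] using l2Inner_le_sqrt_mul_sqrt hu hF
  · simpa only [nsq_eq_l2Inner_self] using l2Inner_le_sqrt_mul_sqrt hv hG

lemma l2Inner_smul_self (s : ℂ) (f : ℝ → ℝ → ℂ) : l2Inner f (s • f) = s.re * nsq f := by
  have hpoint : ∀ z : ℂ, ⟪z, s * z⟫_ℝ = s.re * ‖z‖ ^ 2 := fun z ↦ by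
    rw [Complex.inner, mul_assoc, Complex.mul_conj, Complex.re_mul_ofReal,
      Complex.normSq_eq_norm_sq]
  simp [l2Inner, nsq, hpoint]

section PartialDerivatives

variable {f : ℝ → ℝ → ℂ} {n : WithTop ℕ∞}

lemma SmoothFn.contDiff (hf : SmoothFn f) (n : ℕ) : ContDiff ℝ n (uncurry f) :=
  contDiff_infty.mp hf n

lemma contDiff_pdx (hf : ContDiff ℝ (n + 1) (uncurry f)) : ContDiff ℝ n (uncurry (pdx f)) := by
  have hparam : ContDiff ℝ (n + 1) (uncurry fun (q : ℝ × ℝ) x ↦ f x q.2) :=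
    hf.comp (contDiff_snd.prodMk (contDiff_snd.comp contDiff_fst))
  exact (hparam.fderiv contDiff_fst le_rfl).clm_apply contDiff_const

lemma contDiff_pdy (hf : ContDiff ℝ (n + 1) (uncurry f)) : ContDiff ℝ n (uncurry (pdy f)) := by
  have hparam : ContDiff ℝ (n + 1) (uncurry fun (q : ℝ × ℝ) y ↦ f q.1 y) :=
    hf.comp ((contDiff_fst.comp contDiff_fst).prodMk contDiff_snd)
  exact (hparam.fderiv contDiff_snd le_rfl).clm_apply contDiff_const

lemma continuous_pdx (hf : ContDiff ℝ 1 (uncurry f)) : Continuous (uncurry (pdx f)) :=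
  (contDiff_pdx (n := 0) (by simpa using hf)).continuous

lemma continuous_pdy (hf : ContDiff ℝ 1 (uncurry f)) : Continuous (uncurry (pdy f)) :=
  (contDiff_pdy (n := 0) (by simpa using hf)).continuous

lemma PeriodicX.pdx (hf : PeriodicX f) : PeriodicX (pdx f) := fun x y ↦ by
  simp only [_root_.pdx, ← deriv_comp_add_const, hf _ y]

end PartialDerivatives

section IntegrationByParts

lemma integral_inner_deriv_eq_neg {E : Type*} [NormedAddCommGroup E] [InnerProductSpace ℝ E]
    {f g : ℝ → E} {a b : ℝ} (hf : ContDiff ℝ 1 f) (hg : ContDiff ℝ 1 g)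
    (hab : ⟪f a, g a⟫_ℝ = ⟪f b, g b⟫_ℝ) :
    ∫ t in a..b, ⟪f t, deriv g t⟫_ℝ = -∫ t in a..b, ⟪deriv f t, g t⟫_ℝ := by
  have hfg' : Continuous fun t ↦ ⟪f t, deriv g t⟫_ℝ := hf.continuous.inner hg.continuous_deriv_one
  have hf'g : Continuous fun t ↦ ⟪deriv f t, g t⟫_ℝ := hf.continuous_deriv_one.inner hg.continuous
  rw [eq_neg_iff_add_eq_zero, ← intervalIntegral.integral_add (hfg'.intervalIntegrable _ _)
    (hf'g.intervalIntegrable _ _), intervalIntegral.integral_eq_sub_of_hasDerivAt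
    (fun t _ ↦ (hf.differentiable one_ne_zero t).hasDerivAt.inner ℝ
      (hg.differentiable one_ne_zero t).hasDerivAt) ((hfg'.add hf'g).intervalIntegrable _ _),
    hab, sub_self]

variable {f g : ℝ → ℝ → ℂ}

lemma l2Inner_pdx_right (hf : ContDiff ℝ 1 (uncurry f)) (hg : ContDiff ℝ 1 (uncurry g))
    (hfper : PeriodicX f) (hgper : PeriodicX g) :
    l2Inner f (pdx g) = -l2Inner (pdx f) g := by
  rw [l2Inner_swap hf.continuous (continuous_pdx hg),
    l2Inner_swap (continuous_pdx hf) hg.continuous, ← intervalIntegral.integral_neg]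
  congr 1 with y
  refine integral_inner_deriv_eq_neg (f := fun x ↦ f x y) (g := fun x ↦ g x y)
    (hf.comp (contDiff_id.prodMk contDiff_const)) (hg.comp (contDiff_id.prodMk contDiff_const)) ?_
  rw [← hfper 0 y, ← hgper 0 y, zero_add]

lemma l2Inner_pdy_right (hf : ContDiff ℝ 1 (uncurry f)) (hg : ContDiff ℝ 1 (uncurry g))
    (hf₀ : ∀ x, f x 0 = 0) (hf₁ : ∀ x, f x 1 = 0) :
    l2Inner f (pdy g) = -l2Inner (pdy f) g := by
  rw [l2Inner, l2Inner, ← intervalIntegral.integral_neg]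
  congr 1 with x
  refine integral_inner_deriv_eq_neg (f := f x) (g := g x)
    (hf.comp (contDiff_const.prodMk contDiff_id)) (hg.comp (contDiff_const.prodMk contDiff_id)) ?_
  rw [hf₀, hf₁, inner_zero_left, inner_zero_left]

lemma l2Inner_lap_self (hf : ContDiff ℝ 2 (uncurry f)) (hfper : PeriodicX f)
    (hf₀ : ∀ x, f x 0 = 0) (hf₁ : ∀ x, f x 1 = 0) :
    l2Inner f (lap f) = -(nsq (pdx f) + nsq (pdy f)) := by
  have hf1 : ContDiff ℝ 1 (uncurry f) := hf.of_le one_le_two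
  have hfx : ContDiff ℝ 1 (uncurry (pdx f)) := contDiff_pdx hf
  have hfy : ContDiff ℝ 1 (uncurry (pdy f)) := contDiff_pdy hf
  calc l2Inner f (lap f) = l2Inner f (pdx (pdx f)) + l2Inner f (pdy (pdy f)) :=
        l2Inner_add_right hf.continuous (continuous_pdx hfx) (continuous_pdy hfy)
    _ = -(nsq (pdx f) + nsq (pdy f)) := by
        rw [l2Inner_pdx_right hf1 hfx hfper hfper.pdx, l2Inner_pdy_right hf1 hfy hf₀ hf₁,
          nsq_eq_l2Inner_self, nsq_eq_l2Inner_self, neg_add]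

lemma l2Inner_shear_pdx_self {U : ℝ → ℝ} (hU : Continuous U) (hf : ContDiff ℝ 1 (uncurry f))
    (hfper : PeriodicX f) : l2Inner f (fun x y ↦ U y • pdx f x y) = 0 := by
  have hslice : ∀ y, ∫ x in (0 : ℝ)..1, ⟪f x y, pdx f x y⟫_ℝ = 0 := fun y ↦ by
    have hfy : ContDiff ℝ 1 fun x ↦ f x y := hf.comp (contDiff_id.prodMk contDiff_const)
    have hskew := integral_inner_deriv_eq_neg (a := 0) (b := 1) hfy hfy
      (by rw [← hfper 0 y, zero_add])
    simp only [real_inner_comm (f _ y)] at hskew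
    exact self_eq_neg.mp hskew
  have htransport : Continuous (uncurry fun x y ↦ U y • pdx f x y) :=
    (hU.comp continuous_snd).smul (continuous_pdx hf)
  rw [l2Inner_swap hf.continuous htransport]
  simp only [real_inner_smul_right, intervalIntegral.integral_const_mul, hslice, mul_zero,
    intervalIntegral.integral_zero]

lemma l2Inner_gradient_eq_zero {u v p : ℝ → ℝ → ℂ} (hu : ContDiff ℝ 1 (uncurry u))
    (hv : ContDiff ℝ 1 (uncurry v)) (hp : ContDiff ℝ 1 (uncurry p)) (huper : PeriodicX u)
    (hpper : PeriodicX p) (hv₀ : ∀ x, v x 0 = 0) (hv₁ : ∀ x, v x 1 = 0)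
    (hdiv : ∀ x ∈ Set.Icc (0 : ℝ) 1, ∀ y ∈ Set.Icc (0 : ℝ) 1, pdx u x y + pdy v x y = 0) :
    l2Inner u (pdx p) + l2Inner v (pdy p) = 0 := by
  have hdivp : l2Inner p (pdx u + pdy v) = l2Inner p ((0 : ℝ) • p) :=
    l2Inner_congr_right fun x hx y hy ↦ by simpa using hdiv x hx y hy
  rw [l2Inner_add_right hp.continuous (continuous_pdx hu) (continuous_pdy hv),
    l2Inner_smul_right, zero_mul] at hdivp
  rw [l2Inner_pdx_right hu hp huper hpper, l2Inner_pdy_right hv hp hv₀ hv₁, l2Inner_comm _ p,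
    l2Inner_comm _ p]
  linarith

end IntegrationByParts

lemma advection_diffusion_energy_balance {U : ℝ → ℝ} {ν : ℝ} {s : ℂ} {φ g F : ℝ → ℝ → ℂ}
    (hU : Continuous U) (hφ : ContDiff ℝ 2 (uncurry φ)) (hg : Continuous (uncurry g))
    (hF : Continuous (uncurry F)) (hφper : PeriodicX φ)
    (hφ₀ : ∀ x, φ x 0 = 0) (hφ₁ : ∀ x, φ x 1 = 0)
    (heq : ∀ x ∈ Set.Icc (0 : ℝ) 1, ∀ y ∈ Set.Icc (0 : ℝ) 1,
      s * φ x y + U y * pdx φ x y + g x y = ν * lap φ x y + F x y) :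
    s.re * nsq φ + ν * (nsq (pdx φ) + nsq (pdy φ)) + l2Inner φ g = l2Inner φ F := by
  have hφ1 : ContDiff ℝ 1 (uncurry φ) := hφ.of_le one_le_two
  have hsφ : Continuous (uncurry (s • φ)) := hφ.continuous.const_smul s
  have htransport : Continuous (uncurry fun x y ↦ U y • pdx φ x y) :=
    (hU.comp continuous_snd).smul (continuous_pdx hφ1)
  have hsum : Continuous (uncurry (s • φ + fun x y ↦ U y • pdx φ x y)) := hsφ.add htransport
  have hlap : Continuous (uncurry (ν • lap φ)) :=
    ((continuous_pdx (contDiff_pdx hφ)).add (continuous_pdy (contDiff_pdy hφ))).const_smul ν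
  have hpaired : l2Inner φ (s • φ + (fun x y ↦ U y • pdx φ x y) + g)
      = l2Inner φ (ν • lap φ + F) :=
    l2Inner_congr_right fun x hx y hy ↦ by simpa using heq x hx y hy
  rw [l2Inner_add_right hφ.continuous hsum hg,
    l2Inner_add_right hφ.continuous hsφ htransport, l2Inner_add_right hφ.continuous hlap hF,
    l2Inner_smul_self, l2Inner_shear_pdx_self hU hφ1 hφper, l2Inner_smul_right,
    l2Inner_lap_self hφ hφper hφ₀ hφ₁] at hpaired
  linarith

/-- Classical solutions of the resolvent equations of plane Couette flow linearized about the shear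
`(y, 0)`, with velocity `(u, v)`, pressure `p`, forcing `(F, G)` and no-slip walls `y = 0, 1`. The
equations are imposed on the unit square only, and the viscosity `ν` stands for `1 / R`. -/
structure IsCouetteResolventSolution (ν : ℝ) (s : ℂ) (u v p F G : ℝ → ℝ → ℂ) : Prop where
  contDiff_u : ContDiff ℝ 2 (uncurry u)
  contDiff_v : ContDiff ℝ 2 (uncurry v)
  contDiff_p : ContDiff ℝ 1 (uncurry p)
  continuous_F : Continuous (uncurry F)
  continuous_G : Continuous (uncurry G)
  periodic_u : PeriodicX u
  periodic_v : PeriodicX v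
  periodic_p : PeriodicX p
  u_bottom : ∀ x, u x 0 = 0
  u_top : ∀ x, u x 1 = 0
  v_bottom : ∀ x, v x 0 = 0
  v_top : ∀ x, v x 1 = 0
  div_eq_zero : ∀ x ∈ Set.Icc (0 : ℝ) 1, ∀ y ∈ Set.Icc (0 : ℝ) 1, pdx u x y + pdy v x y = 0
  momentum_x : ∀ x ∈ Set.Icc (0 : ℝ) 1, ∀ y ∈ Set.Icc (0 : ℝ) 1,
    s * u x y + y * pdx u x y + v x y + pdx p x y = ν * lap u x y + F x y
  momentum_y : ∀ x ∈ Set.Icc (0 : ℝ) 1, ∀ y ∈ Set.Icc (0 : ℝ) 1,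
    s * v x y + y * pdx v x y + pdy p x y = ν * lap v x y + G x y

section Couette

variable {ν : ℝ} {s : ℂ} {u v p F G : ℝ → ℝ → ℂ}

lemma IsCouetteResolventSolution.energy_identity (h : IsCouetteResolventSolution ν s u v p F G) :
    s.re * (nsq u + nsq v) + ν * (nsq (pdx u) + nsq (pdy u) + nsq (pdx v) + nsq (pdy v))
      = l2Inner u F + l2Inner v G - l2Inner u v := by
  have hu : ContDiff ℝ 1 (uncurry u) := h.contDiff_u.of_le one_le_two
  have hv : ContDiff ℝ 1 (uncurry v) := h.contDiff_v.of_le one_le_two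
  have hpx := continuous_pdx h.contDiff_p
  have hbalance_u := advection_diffusion_energy_balance (U := id) (g := v + pdx p) continuous_id
    h.contDiff_u (hv.continuous.add hpx) h.continuous_F h.periodic_u h.u_bottom h.u_top
    fun x hx y hy ↦ (add_assoc _ _ _).symm.trans (h.momentum_x x hx y hy)
  have hbalance_v := advection_diffusion_energy_balance (U := id) continuous_id
    h.contDiff_v (continuous_pdy h.contDiff_p) h.continuous_G h.periodic_v h.v_bottom h.v_top
    h.momentum_y
  have hpressure := l2Inner_gradient_eq_zero hu hv h.contDiff_p h.periodic_u h.periodic_p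
    h.v_bottom h.v_top h.div_eq_zero
  rw [l2Inner_add_right hu.continuous hv.continuous hpx] at hbalance_u
  linarith

theorem energy_estimate_real_part_general (h : IsCouetteResolventSolution ν s u v p F G) :
    s.re * (nsq u + nsq v) + ν * (nsq (pdx u) + nsq (pdy u) + nsq (pdx v) + nsq (pdy v))
      ≤ (nsq u + nsq v) / 2 + √(nsq u + nsq v) * √(nsq F + nsq G) := by
  have hu := h.contDiff_u.continuous
  have hv := h.contDiff_v.continuous
  have hcross := neg_two_mul_l2Inner_le hu hv
  have hforcing := l2Inner_add_le_sqrt_mul_sqrt hu hv h.continuous_F h.continuous_G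
  rw [← nsq_eq_l2Inner_self, ← nsq_eq_l2Inner_self] at hcross
  rw [h.energy_identity]
  linarith

end Couette

/-- If Re(s) ≥ 0, then
Re(s)·‖w‖² + (1/R)·‖Dw‖² ≤ ‖w‖² + ‖w‖·‖H‖. -/
theorem energy_estimate_real_part
    (R : ℝ) (hR : 0 < R) (s : ℂ)
    (u v p F G : ℝ → ℝ → ℂ)
    (hu : SmoothFn u) (hv : SmoothFn v) (hp : SmoothFn p) (hF : SmoothFn F) (hG : SmoothFn G)
    (hup : PeriodicX u) (hvp : PeriodicX v) (hpp : PeriodicX p)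
    (hFp : PeriodicX F) (hGp : PeriodicX G)
    (hub0 : ∀ x, u x 0 = 0) (hub1 : ∀ x, u x 1 = 0)
    (hvb0 : ∀ x, v x 0 = 0) (hvb1 : ∀ x, v x 1 = 0)
    (hdiv : ∀ x y, pdx u x y + pdy v x y = 0)
    (heq1 : ∀ x ∈ Set.Icc (0:ℝ) 1, ∀ y ∈ Set.Icc (0:ℝ) 1,
      s * u x y + (y:ℂ) * pdx u x y + v x y + pdx p x y
        = (1/(R:ℂ)) * lap u x y + F x y)
    (heq2 : ∀ x ∈ Set.Icc (0:ℝ) 1, ∀ y ∈ Set.Icc (0:ℝ) 1,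
      s * v x y + (y:ℂ) * pdx v x y + pdy p x y
        = (1/(R:ℂ)) * lap v x y + G x y)
    (hsre : 0 ≤ s.re) :
    s.re * (nsq u + nsq v)
      + (1/R) * (nsq (pdx u) + nsq (pdy u) + nsq (pdx v) + nsq (pdy v))
      ≤ (nsq u + nsq v)
        + Real.sqrt (nsq u + nsq v) * Real.sqrt (nsq F + nsq G) := by
  have hsol : IsCouetteResolventSolution (1 / R) s u v p F G :=
    ⟨hu.contDiff 2, hv.contDiff 2, mod_cast hp.contDiff 1, hF.continuous, hG.continuous,
      hup, hvp, hpp, hub0, hub1, hvb0, hvb1, fun x _ y _ ↦ hdiv x y,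
      by simpa using heq1, by simpa using heq2⟩
  linarith [energy_estimate_real_part_general hsol, nsq_nonneg u, nsq_nonneg v]

end
end

section
/- If |k| > √(R/√2) and I = F' − i·k·G, where F : [0,1] → ℂ is continuously differentiable and G : [0,1] → ℂ is continuous, then k²·‖ψ‖² ≤ 16·R²·(‖F‖² + ‖G‖²) and ‖ψ'‖² ≤ 16·R²·(‖F‖² + ‖G‖²). -/
open MeasureTheory Complex

noncomputable section

/-- Square of the L² norm over [0,1]. -/
def l2sq (f : ℝ → ℂ) : ℝ := ∫ y in (0:ℝ)..(1:ℝ), ‖f y‖ ^ 2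

/-- L² inner product over [0,1]. -/
def l2ip (f g : ℝ → ℂ) : ℂ := ∫ y in (0:ℝ)..(1:ℝ), (starRingEnd ℂ) (f y) * g y

/-!
Pairing the equation with `ψ` and integrating by parts turns it into an energy identity: the
dissipative terms become `‖ψ''‖² / R`, `(s + 2k²/R) ‖ψ'‖²` and `(s k² + k⁴/R) ‖ψ‖²`, and the shear
`i k y` contributes a purely imaginary quantity together with the single commutator term
`i k ⟨ψ, ψ'⟩`. After taking real parts and multiplying by `R`,
`2 k² ‖ψ'‖² + k⁴ ‖ψ‖² ≤ R (|⟨ψ', F⟩| + |k| |⟨ψ, ψ'⟩| + |k| |⟨ψ, G⟩|)`.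
The hypothesis on `k` says `R ≤ √2 k²`, and under it Young's inequality absorbs the commutator term
into half of the left-hand side. Half of what remains absorbs the forcing terms, which gives
`k⁴ (k² ‖ψ‖² + ‖ψ'‖²) ≤ 4 R² (‖F‖² + ‖G‖²)`.
-/

section InnerProduct

variable {f g h : ℝ → ℂ}

lemma l2sq_nonneg (f : ℝ → ℂ) : 0 ≤ l2sq f :=
  intervalIntegral.integral_nonneg zero_le_one fun _ _ => by positivity

lemma intervalIntegrable_conj_mul (hf : Continuous f) (hg : Continuous g) (a b : ℝ) :
    IntervalIntegrable (fun y => (starRingEnd ℂ) (f y) * g y) volume a b :=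
  ((continuous_conj.comp hf).mul hg).intervalIntegrable a b

lemma l2ip_congr_right (hgh : Set.EqOn g h (Set.Icc 0 1)) : l2ip f g = l2ip f h :=
  intervalIntegral.integral_congr fun y hy => by
    rw [Set.uIcc_of_le zero_le_one] at hy
    simp only [hgh hy]

lemma l2ip_add_right (hf : Continuous f) (hg : Continuous g) (hh : Continuous h) :
    l2ip f (fun y => g y + h y) = l2ip f g + l2ip f h := by
  simp only [l2ip, mul_add]
  exact intervalIntegral.integral_add (intervalIntegrable_conj_mul hf hg 0 1)
    (intervalIntegrable_conj_mul hf hh 0 1)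

lemma l2ip_sub_right (hf : Continuous f) (hg : Continuous g) (hh : Continuous h) :
    l2ip f (fun y => g y - h y) = l2ip f g - l2ip f h := by
  simp only [l2ip, mul_sub]
  exact intervalIntegral.integral_sub (intervalIntegrable_conj_mul hf hg 0 1)
    (intervalIntegrable_conj_mul hf hh 0 1)

lemma l2ip_const_mul_right (c : ℂ) (f g : ℝ → ℂ) :
    l2ip f (fun y => c * g y) = c * l2ip f g := by
  simp only [l2ip, mul_left_comm _ c]
  exact intervalIntegral.integral_const_mul c _

lemma re_l2ip_mul_self {w : ℝ → ℂ} {c : ℝ} (hf : Continuous f) (hw : Continuous w)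
    (hre : ∀ y, (w y).re = c) : (l2ip f fun y => w y * f y).re = c * l2sq f := by
  have re_integrand (y : ℝ) :
      ((starRingEnd ℂ) (f y) * (w y * f y)).re = c * ‖f y‖ ^ 2 := by
    rw [mul_left_comm, conj_mul', ← ofReal_pow, re_mul_ofReal, hre]
  have re_integral := reCLM.intervalIntegral_comp_comm
    (intervalIntegrable_conj_mul hf (hw.fun_mul hf) 0 1)
  simp only [reCLM_apply, re_integrand] at re_integral
  rw [l2ip, ← re_integral, l2sq, intervalIntegral.integral_const_mul]

lemma l2ip_self (f : ℝ → ℂ) : l2ip f f = l2sq f := by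
  simp only [l2ip, l2sq, conj_mul', ← ofReal_pow, intervalIntegral.integral_ofReal]

lemma mul_norm_l2ip_le (hf : Continuous f) (hg : Continuous g) {a b : ℝ} (ha : 0 ≤ a)
    (hb : 0 ≤ b) : a * b * ‖l2ip f g‖ ≤ a ^ 2 / 4 * l2sq f + b ^ 2 * l2sq g := by
  have young (y : ℝ) :
      ‖((a * b : ℝ) : ℂ) * ((starRingEnd ℂ) (f y) * g y)‖ ≤
        a ^ 2 / 4 * ‖f y‖ ^ 2 + b ^ 2 * ‖g y‖ ^ 2 := by
    rw [norm_mul, norm_mul, RCLike.norm_conj, norm_real, Real.norm_of_nonneg (mul_nonneg ha hb)]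
    linarith only [sq_nonneg (a / 2 * ‖f y‖ - b * ‖g y‖)]
  have hf_sq : IntervalIntegrable (fun y => a ^ 2 / 4 * ‖f y‖ ^ 2) volume 0 1 :=
    Continuous.intervalIntegrable (by fun_prop) 0 1
  have hg_sq : IntervalIntegrable (fun y => b ^ 2 * ‖g y‖ ^ 2) volume 0 1 :=
    Continuous.intervalIntegrable (by fun_prop) 0 1
  calc a * b * ‖l2ip f g‖
      = ‖∫ y in (0 : ℝ)..1, ((a * b : ℝ) : ℂ) * ((starRingEnd ℂ) (f y) * g y)‖ := by
        rw [intervalIntegral.integral_const_mul, norm_mul, norm_real,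
          Real.norm_of_nonneg (mul_nonneg ha hb), l2ip]
    _ ≤ ∫ y in (0 : ℝ)..1, (a ^ 2 / 4 * ‖f y‖ ^ 2 + b ^ 2 * ‖g y‖ ^ 2) :=
        intervalIntegral.norm_integral_le_of_norm_le zero_le_one (.of_forall fun y _ => young y)
          (hf_sq.add hg_sq)
    _ = a ^ 2 / 4 * l2sq f + b ^ 2 * l2sq g := by
        rw [intervalIntegral.integral_add hf_sq hg_sq, intervalIntegral.integral_const_mul,
          intervalIntegral.integral_const_mul, l2sq, l2sq]

end InnerProduct

section IntegrationByParts

variable {f g w : ℝ → ℂ}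

lemma l2ip_deriv_right (hf : ContDiff ℝ 1 f) (hg : ContDiff ℝ 1 g) (hf0 : f 0 = 0)
    (hf1 : f 1 = 0) : l2ip f (deriv g) = -l2ip (deriv f) g := by
  have hasDerivAt_conj (y : ℝ) :
      HasDerivAt (fun y => (starRingEnd ℂ) (f y)) ((starRingEnd ℂ) (deriv f y)) y :=
    (hf.differentiable_one y).hasDerivAt.star
  have hf' : Continuous fun y => (starRingEnd ℂ) (deriv f y) :=
    continuous_conj.comp hf.continuous_deriv_one
  have by_parts := intervalIntegral.integral_mul_deriv_eq_deriv_mul (a := 0) (b := 1)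
    (fun y _ => hasDerivAt_conj y) (fun y _ => (hg.differentiable_one y).hasDerivAt)
    (hf'.intervalIntegrable 0 1) (hg.continuous_deriv_one.intervalIntegrable 0 1)
  simpa [l2ip, hf0, hf1] using by_parts

lemma l2ip_deriv_sub_const_mul_right {F G : ℝ → ℂ} (hf : ContDiff ℝ 1 f) (hF : ContDiff ℝ 1 F)
    (hG : Continuous G) (hf0 : f 0 = 0) (hf1 : f 1 = 0) (c : ℂ) :
    l2ip f (fun y => deriv F y - c * G y) = -l2ip (deriv f) F - c * l2ip f G := by
  rw [l2ip_sub_right hf.continuous hF.continuous_deriv_one (by fun_prop), l2ip_const_mul_right,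
    l2ip_deriv_right hf hF hf0 hf1]

lemma l2ip_iteratedDeriv_succ {n : ℕ} (hf : ContDiff ℝ 1 f) (hg : ContDiff ℝ (n + 1) g)
    (hf0 : f 0 = 0) (hf1 : f 1 = 0) :
    l2ip f (iteratedDeriv (n + 1) g) = -l2ip (deriv f) (iteratedDeriv n g) := by
  have hg_n : ContDiff ℝ 1 (iteratedDeriv n g) := by
    rw [iteratedDeriv_eq_iterate]
    exact ContDiff.iterate_deriv' 1 n (by rwa [add_comm] at hg)
  rw [iteratedDeriv_succ, l2ip_deriv_right hf hg_n hf0 hf1]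

lemma l2ip_iteratedDeriv_four_self (hf : ContDiff ℝ 4 f) (hf0 : f 0 = 0) (hf1 : f 1 = 0)
    (hf0' : deriv f 0 = 0) (hf1' : deriv f 1 = 0) :
    l2ip f (iteratedDeriv 4 f) = l2sq (iteratedDeriv 2 f) := by
  have hf' : ContDiff ℝ 1 (deriv f) := (hf.of_le (by norm_num : (2 : WithTop ℕ∞) ≤ 4)).deriv'
  calc l2ip f (iteratedDeriv 4 f) = -l2ip (deriv f) (iteratedDeriv 3 f) :=
        l2ip_iteratedDeriv_succ (hf.of_le (by norm_num)) hf hf0 hf1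
    _ = l2ip (deriv (deriv f)) (iteratedDeriv 2 f) := by
        rw [l2ip_iteratedDeriv_succ hf' (hf.of_le (by norm_num)) hf0' hf1', neg_neg]
    _ = l2sq (iteratedDeriv 2 f) := by
        rw [iteratedDeriv_succ, iteratedDeriv_one, l2ip_self]

lemma l2ip_mul_deriv_right (hf : ContDiff ℝ 1 f) (hg : ContDiff ℝ 1 g) (hw : ContDiff ℝ 1 w)
    (hf0 : f 0 = 0) (hf1 : f 1 = 0) :
    l2ip f (fun y => w y * deriv g y) =
      -l2ip (deriv f) (fun y => w y * g y) - l2ip f (fun y => deriv w y * g y) := by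
  have deriv_mul_eq : deriv (fun y => w y * g y) = fun y => deriv w y * g y + w y * deriv g y :=
    funext fun y => deriv_fun_mul (hw.differentiable_one y) (hg.differentiable_one y)
  have by_parts := l2ip_deriv_right hf (hw.mul hg) hf0 hf1
  rw [deriv_mul_eq, l2ip_add_right hf.continuous
    (hw.continuous_deriv_one.fun_mul hg.continuous)
    (hw.continuous.fun_mul hg.continuous_deriv_one)] at by_parts
  linear_combination by_parts

lemma l2ip_fourth_order_operator {q : ℝ → ℂ} {α : ℂ} (hf : ContDiff ℝ 4 f) (hw : ContDiff ℝ 1 w)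
    (hq : Continuous q) (hf0 : f 0 = 0) (hf1 : f 1 = 0) (hf0' : deriv f 0 = 0)
    (hf1' : deriv f 1 = 0) :
    l2ip f (fun y => α * iteratedDeriv 4 f y - w y * iteratedDeriv 2 f y + q y * f y) =
      α * l2sq (iteratedDeriv 2 f) + l2ip (deriv f) (fun y => w y * deriv f y)
        + l2ip f (fun y => deriv w y * deriv f y) + l2ip f (fun y => q y * f y) := by
  have hf_one : ContDiff ℝ 1 f := hf.of_le (by norm_num)
  have hf' : ContDiff ℝ 1 (deriv f) := (hf.of_le (by norm_num : (2 : WithTop ℕ∞) ≤ 4)).deriv'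
  have hf₂ : Continuous (iteratedDeriv 2 f) := hf.continuous_iteratedDeriv 2 (by norm_num)
  have hf₄ : Continuous (iteratedDeriv 4 f) := hf.continuous_iteratedDeriv 4 (by norm_num)
  have fourth_cont : Continuous fun y => α * iteratedDeriv 4 f y := continuous_const.fun_mul hf₄
  have second_cont : Continuous fun y => w y * iteratedDeriv 2 f y := hw.continuous.fun_mul hf₂
  have second_order := l2ip_mul_deriv_right hf_one hf' hw hf0 hf1
  rw [show deriv (deriv f) = iteratedDeriv 2 f by rw [iteratedDeriv_succ, iteratedDeriv_one]]
    at second_order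
  rw [l2ip_add_right hf.continuous (fourth_cont.fun_sub second_cont)
      (hq.fun_mul hf.continuous),
    l2ip_sub_right hf.continuous fourth_cont second_cont, l2ip_const_mul_right,
    l2ip_iteratedDeriv_four_self hf hf0 hf1 hf0' hf1', second_order]
  ring

end IntegrationByParts

/-- `ψ` is a clamped `C⁴` solution on `[0, 1]` of the Orr–Sommerfeld-type equation with Reynolds
number `R`, wave number `k`, spectral parameter `s` and forcing `H`. The wave number is allowed to
be any real number, and `ψ` is defined on all of `ℝ` so that derivatives at the endpoints are
ordinary derivatives. -/
structure IsOrrSommerfeldSolution (R k : ℝ) (s : ℂ) (ψ H : ℝ → ℂ) : Prop where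
  contDiff : ContDiff ℝ 4 ψ
  apply_zero : ψ 0 = 0
  apply_one : ψ 1 = 0
  deriv_zero : deriv ψ 0 = 0
  deriv_one : deriv ψ 1 = 0
  equation : ∀ y ∈ Set.Icc (0 : ℝ) 1,
    (1 / (R : ℂ)) * iteratedDeriv 4 ψ y
      - (s + 2 * (k : ℂ) ^ 2 / (R : ℂ) + I * (k : ℂ) * (y : ℂ)) * iteratedDeriv 2 ψ y
      + (s * (k : ℂ) ^ 2 + (k : ℂ) ^ 4 / (R : ℂ) + I * (k : ℂ) ^ 3 * (y : ℂ)) * ψ y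
      = H y

namespace IsOrrSommerfeldSolution

variable {R k : ℝ} {s : ℂ} {ψ F G H : ℝ → ℂ}

lemma contDiff_deriv (h : IsOrrSommerfeldSolution R k s ψ H) : ContDiff ℝ 3 (deriv ψ) :=
  h.contDiff.deriv'

lemma re_energy_identity (h : IsOrrSommerfeldSolution R k s ψ H) :
    1 / R * l2sq (iteratedDeriv 2 ψ) + (s.re + 2 * k ^ 2 / R) * l2sq (deriv ψ)
      + (I * k * l2ip ψ (deriv ψ)).re + (s.re * k ^ 2 + k ^ 4 / R) * l2sq ψ = (l2ip ψ H).re := by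
  set w : ℝ → ℂ := fun y => s + 2 * (k : ℂ) ^ 2 / (R : ℂ) + I * (k : ℂ) * (y : ℂ)
  set q : ℝ → ℂ := fun y => s * (k : ℂ) ^ 2 + (k : ℂ) ^ 4 / (R : ℂ) + I * (k : ℂ) ^ 3 * (y : ℂ)
  have hw : ContDiff ℝ 1 w := contDiff_const.add (contDiff_const.mul ofRealCLM.contDiff)
  have hq : Continuous q := by fun_prop
  have hw' : deriv w = fun _ => I * (k : ℂ) := funext fun y => by
    have hasDerivAt_w := ((hasDerivAt_id y).ofReal_comp.const_mul (I * (k : ℂ))).const_add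
      (s + 2 * (k : ℂ) ^ 2 / (R : ℂ))
    simpa only [id, ofReal_one, mul_one] using hasDerivAt_w.deriv
  have re_w (y : ℝ) : (w y).re = s.re + 2 * k ^ 2 / R := by simp [w, ← ofReal_pow]
  have re_q (y : ℝ) : (q y).re = s.re * k ^ 2 + k ^ 4 / R := by simp [q, ← ofReal_pow]
  have identity := l2ip_fourth_order_operator (α := 1 / (R : ℂ)) h.contDiff hw hq
    h.apply_zero h.apply_one h.deriv_zero h.deriv_one
  rw [l2ip_congr_right h.equation, hw', l2ip_const_mul_right] at identity
  rw [identity, add_re, add_re, add_re, re_l2ip_mul_self h.contDiff_deriv.continuous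
    hw.continuous re_w, re_l2ip_mul_self h.contDiff.continuous hq re_q]
  norm_cast

lemma energy_le (h : IsOrrSommerfeldSolution R k s ψ fun y => deriv F y - I * (k : ℂ) * G y)
    (hR : 0 < R) (hs : 0 ≤ s.re) (hF : ContDiff ℝ 1 F) (hG : Continuous G) :
    2 * k ^ 2 * l2sq (deriv ψ) + k ^ 4 * l2sq ψ ≤
      R * (‖l2ip (deriv ψ) F‖ + |k| * ‖l2ip ψ (deriv ψ)‖ + |k| * ‖l2ip ψ G‖) := by
  have neg_re_le (z : ℂ) : -z.re ≤ ‖z‖ := (neg_le_abs _).trans (abs_re_le_norm z)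
  have neg_re_I_mul_le (z : ℂ) : -(I * k * z).re ≤ |k| * ‖z‖ := by
    simpa using neg_re_le (I * k * z)
  have identity := h.re_energy_identity
  rw [l2ip_deriv_sub_const_mul_right (h.contDiff.of_le (by norm_num)) hF hG h.apply_zero
    h.apply_one, sub_re, neg_re] at identity
  have second_nonneg : 0 ≤ 1 / R * l2sq (iteratedDeriv 2 ψ) :=
    mul_nonneg (by positivity) (l2sq_nonneg _)
  have s_deriv_nonneg : 0 ≤ s.re * l2sq (deriv ψ) := mul_nonneg hs (l2sq_nonneg _)
  have s_nonneg : 0 ≤ s.re * k ^ 2 * l2sq ψ :=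
    mul_nonneg (mul_nonneg hs (sq_nonneg k)) (l2sq_nonneg _)
  calc 2 * k ^ 2 * l2sq (deriv ψ) + k ^ 4 * l2sq ψ
      = R * (2 * k ^ 2 / R * l2sq (deriv ψ) + k ^ 4 / R * l2sq ψ) := by field_simp
    _ ≤ _ := mul_le_mul_of_nonneg_left (by
        linarith [neg_re_le (l2ip (deriv ψ) F), neg_re_I_mul_le (l2ip ψ (deriv ψ)),
          neg_re_I_mul_le (l2ip ψ G)]) hR.le

end IsOrrSommerfeldSolution

theorem orr_sommerfeld_estimates_large_k_general {R k : ℝ} {s : ℂ} {ψ F G : ℝ → ℂ} (hR : 0 < R)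
    (hs : 0 ≤ s.re) (hF : ContDiff ℝ 1 F) (hG : Continuous G)
    (hψ : IsOrrSommerfeldSolution R k s ψ fun y => deriv F y - I * (k : ℂ) * G y)
    (hk : √(R / √2) ≤ |k|) :
    k ^ 4 * (k ^ 2 * l2sq ψ + l2sq (deriv ψ)) ≤ 4 * R ^ 2 * (l2sq F + l2sq G) := by
  have hk_pos : 0 < |k| := (Real.sqrt_pos.mpr (by positivity)).trans_le hk
  have hRk : R ≤ √2 * k ^ 2 := by
    rwa [Real.sqrt_le_left hk_pos.le, sq_abs, div_le_iff₀' (by positivity)] at hk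
  have hψ_cont := hψ.contDiff.continuous
  have hψ'_cont := hψ.contDiff_deriv.continuous
  have energy := mul_le_mul_of_nonneg_left (hψ.energy_le hR hs hF hG) (sq_nonneg k)
  have commutator : k ^ 2 * (R * (|k| * ‖l2ip ψ (deriv ψ)‖)) ≤
      k ^ 2 * (k ^ 4 / 2 * l2sq ψ + k ^ 2 * l2sq (deriv ψ)) := by
    gcongr k ^ 2 * ?_
    calc R * (|k| * ‖l2ip ψ (deriv ψ)‖) ≤ √2 * k ^ 2 * |k| * ‖l2ip ψ (deriv ψ)‖ := by
          rw [mul_assoc (√2 * k ^ 2)]; gcongr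
      _ ≤ (√2 * k ^ 2) ^ 2 / 4 * l2sq ψ + |k| ^ 2 * l2sq (deriv ψ) :=
          mul_norm_l2ip_le hψ_cont hψ'_cont (by positivity) (abs_nonneg k)
      _ = k ^ 4 / 2 * l2sq ψ + k ^ 2 * l2sq (deriv ψ) := by
          rw [mul_pow, Real.sq_sqrt zero_le_two, sq_abs]; ring
  have forcing_F := mul_norm_l2ip_le hψ'_cont hF.continuous (sq_nonneg k) hR.le
  have forcing_G := mul_norm_l2ip_le hψ_cont hG (mul_nonneg (sq_nonneg k) (abs_nonneg k)) hR.le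
  rw [mul_pow, sq_abs] at forcing_G
  have remainder_nonneg : 0 ≤ k ^ 4 * l2sq (deriv ψ) := mul_nonneg (by positivity) (l2sq_nonneg _)
  linarith only [energy, commutator, forcing_F, forcing_G, remainder_nonneg]

/-- estimates for ψ when |k| > √(R/√2) and I = F' − i·k·G. -/
theorem orr_sommerfeld_estimates_large_k
    (R : ℝ) (hR : 0 < R) (k : ℤ) (s : ℂ) (hs : 0 ≤ s.re)
    (ψ : ℝ → ℂ) (hψ : ContDiff ℝ 4 ψ)
    (hb0 : ψ 0 = 0) (hb1 : ψ 1 = 0) (hb0' : deriv ψ 0 = 0) (hb1' : deriv ψ 1 = 0)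
    (F G : ℝ → ℂ) (hF : ContDiff ℝ 1 F) (hG : Continuous G)
    (heq : ∀ y ∈ Set.Icc (0:ℝ) 1,
      (1/(R:ℂ)) * iteratedDeriv 4 ψ y
        - (s + 2 * (k:ℂ)^2 / (R:ℂ) + Complex.I * (k:ℂ) * (y:ℂ)) * iteratedDeriv 2 ψ y
        + (s * (k:ℂ)^2 + (k:ℂ)^4 / (R:ℂ) + Complex.I * (k:ℂ)^3 * (y:ℂ)) * ψ y
        = deriv F y - Complex.I * (k:ℂ) * G y)
    (hk : Real.sqrt (R / Real.sqrt 2) < |(k:ℝ)|) :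
    (k:ℝ)^2 * l2sq ψ ≤ 16 * R^2 * (l2sq F + l2sq G)
      ∧ l2sq (deriv ψ) ≤ 16 * R^2 * (l2sq F + l2sq G) := by
  have solution : IsOrrSommerfeldSolution R k s ψ fun y => deriv F y - I * ((k : ℝ) : ℂ) * G y :=
    ⟨hψ, hb0, hb1, hb0', hb1', by simpa using heq⟩
  have estimate := orr_sommerfeld_estimates_large_k_general hR hs hF hG solution hk.le
  have one_le_k_pow : (1 : ℝ) ≤ (k : ℝ) ^ 4 := by
    have hk_ne : k ≠ 0 := by exact_mod_cast abs_pos.mp ((Real.sqrt_nonneg _).trans_lt hk)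
    exact_mod_cast Int.add_one_le_iff.mpr (show 0 < k ^ 4 by positivity)
  have hψ_nonneg : 0 ≤ (k : ℝ) ^ 2 * l2sq ψ := mul_nonneg (sq_nonneg _) (l2sq_nonneg ψ)
  have hψ'_nonneg := l2sq_nonneg (deriv ψ)
  have sum_le := le_mul_of_one_le_left (add_nonneg hψ_nonneg hψ'_nonneg) one_le_k_pow
  have forcing_nonneg : 0 ≤ R ^ 2 * (l2sq F + l2sq G) :=
    mul_nonneg (sq_nonneg R) (add_nonneg (l2sq_nonneg F) (l2sq_nonneg G))
  constructor <;> linarith only [estimate, sum_le, hψ_nonneg, hψ'_nonneg, forcing_nonneg]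

end
end

section
/- If |k| > √(R/√2) and I = F', where F : [0,1] → ℂ is continuously differentiable, then the solution ψ satisfies k⁶·‖ψ‖² ≤ 2·R²·‖F‖², k⁴·‖ψ'‖² ≤ R²·‖F‖², and k²·‖ψ''‖² ≤ R²·‖F‖². -/
open MeasureTheory Complex

noncomputable section

/-!
Testing the equation with `ψ` and taking real parts gives, on any interval, the energy inequality
`‖ψ''‖² + 2k²‖ψ'‖² + k⁴‖ψ‖² ≤ R|k| ∫ |ψ||ψ'| + R ∫ |ψ'||F|`: the shear contributes only through
the derivative `ik` of its coefficient, and `Re s ≥ 0` has the good sign. When `R² ≤ 2k⁴`, Young's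
inequality absorbs the first term on the right, leaving
`k²‖ψ''‖² + k⁴‖ψ'‖² + k⁶‖ψ‖²/2 ≤ k²R ∫ |ψ'||F|`, and each estimate follows by splitting the
remaining product with a suitable weight.
-/

open scoped ComplexConjugate

section Calculus

variable {a b : ℝ}

theorem hasDerivAt_iteratedDeriv {𝕜 E : Type*} [NontriviallyNormedField 𝕜] [NormedAddCommGroup E]
    [NormedSpace 𝕜 E] {f : 𝕜 → E} {n : WithTop ℕ∞} {m : ℕ} (hf : ContDiff 𝕜 n f) (hmn : m < n)
    (x : 𝕜) : HasDerivAt (iteratedDeriv m f) (iteratedDeriv (m + 1) f x) x := by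
  rw [iteratedDeriv_succ]
  exact (hf.differentiable_iteratedDeriv m hmn x).hasDerivAt

theorem hasDerivAt_deriv_iteratedDeriv_two {𝕜 E : Type*} [NontriviallyNormedField 𝕜]
    [NormedAddCommGroup E] [NormedSpace 𝕜 E] {f : 𝕜 → E} (hf : ContDiff 𝕜 2 f) (x : 𝕜) :
    HasDerivAt (deriv f) (iteratedDeriv 2 f x) x := by
  simpa only [iteratedDeriv_one] using hasDerivAt_iteratedDeriv (m := 1) hf (by norm_num) x

theorem integral_conj_deriv_mul_add_conj_mul_deriv_eq_zero {𝕜 : Type*} [RCLike 𝕜]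
    {f g f' g' : ℝ → 𝕜}
    (hf : ∀ y ∈ Set.uIcc a b, HasDerivAt f (f' y) y)
    (hg : ∀ y ∈ Set.uIcc a b, HasDerivAt g (g' y) y)
    (hf' : IntervalIntegrable f' volume a b) (hg' : IntervalIntegrable g' volume a b)
    (hfa : f a = 0) (hfb : f b = 0) :
    ∫ y in a..b, (conj (f' y) * g y + conj (f y) * g' y) = 0 := by
  have hconj : IntervalIntegrable (fun y ↦ conj (f' y)) volume a b :=
    ⟨(RCLike.conjLIE (K := 𝕜)).integrable_comp_iff.2 hf'.1,
      (RCLike.conjLIE (K := 𝕜)).integrable_comp_iff.2 hf'.2⟩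
  refine (intervalIntegral.integral_deriv_mul_eq_sub
    (fun y hy ↦ (hf y hy).star) hg hconj hg').trans ?_
  simp [hfa, hfb]

theorem two_mul_mul_integral_norm_mul_norm_le {E E' : Type*} [SeminormedAddCommGroup E]
    [SeminormedAddCommGroup E'] {f : ℝ → E} {g : ℝ → E'} (hf : Continuous f) (hg : Continuous g)
    (hab : a ≤ b) (α β : ℝ) :
    2 * α * β * ∫ y in a..b, ‖f y‖ * ‖g y‖ ≤
      α ^ 2 * (∫ y in a..b, ‖f y‖ ^ 2) + β ^ 2 * ∫ y in a..b, ‖g y‖ ^ 2 := by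
  simp only [← intervalIntegral.integral_const_mul]
  rw [← intervalIntegral.integral_add (Continuous.intervalIntegrable (by fun_prop) a b)
    (Continuous.intervalIntegrable (by fun_prop) a b)]
  refine intervalIntegral.integral_mono_on hab (Continuous.intervalIntegrable (by fun_prop) a b)
    (Continuous.intervalIntegrable (by fun_prop) a b) fun y _ ↦ ?_
  linarith [two_mul_le_add_sq (α * ‖f y‖) (β * ‖g y‖)]

end Calculus

section ClampedFourthOrder

/-- The no-slip (clamped) boundary conditions `ψ = ψ' = 0` at both ends of `[a, b]`. -/
structure IsClamped (a b : ℝ) (ψ : ℝ → ℂ) : Prop where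
  left : ψ a = 0
  right : ψ b = 0
  deriv_left : deriv ψ a = 0
  deriv_right : deriv ψ b = 0

variable {a b : ℝ} {ψ G c c' q : ℝ → ℂ}

-- The divergence form of `ψ'''' - c ψ'' + q ψ = G'`.
theorem hasDerivAt_flux (hψ : ContDiff ℝ 4 ψ) {y : ℝ} (hG : DifferentiableAt ℝ G y)
    (hc : HasDerivAt c (c' y) y)
    (heq : iteratedDeriv 4 ψ y - c y * iteratedDeriv 2 ψ y + q y * ψ y = deriv G y) :
    HasDerivAt (fun y ↦ iteratedDeriv 3 ψ y - c y * deriv ψ y - G y)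
      (-(c' y * deriv ψ y + q y * ψ y)) y := by
  refine (((hasDerivAt_iteratedDeriv hψ (by norm_num) y).sub (hc.mul
    (hasDerivAt_deriv_iteratedDeriv_two (hψ.of_le (by norm_num)) y))).sub
    hG.hasDerivAt).congr_deriv ?_
  linear_combination heq

theorem integral_energy_eq_of_clamped (hψ : ContDiff ℝ 4 ψ) (hψ₀ : IsClamped a b ψ)
    (hG : Differentiable ℝ G) (hc : ∀ y, HasDerivAt c (c' y) y) (hc' : Continuous c')
    (hq : Continuous q)
    (heq : ∀ y ∈ Set.uIcc a b,
      iteratedDeriv 4 ψ y - c y * iteratedDeriv 2 ψ y + q y * ψ y = deriv G y) :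
    ∫ y in a..b, ((‖iteratedDeriv 2 ψ y‖ : ℂ) ^ 2 + c y * (‖deriv ψ y‖ : ℂ) ^ 2
        + q y * (‖ψ y‖ : ℂ) ^ 2) =
      ∫ y in a..b, -(c' y * (conj (ψ y) * deriv ψ y) + conj (deriv ψ y) * G y) := by
  have hG_cont : Continuous G := hG.continuous
  have hc_cont : Continuous c := continuous_iff_continuousAt.2 fun y ↦ (hc y).continuousAt
  have hψ'_cont : Continuous (deriv ψ) := hψ.continuous_deriv (by norm_num)
  have hψ''_cont := hψ.continuous_iteratedDeriv 2 (by norm_num)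
  have hψ'''_cont := hψ.continuous_iteratedDeriv 3 (by norm_num)
  have integrable {f : ℝ → ℂ} (hf : Continuous f) : IntervalIntegrable f volume a b :=
    hf.intervalIntegrable a b
  have hflux_test := integral_conj_deriv_mul_add_conj_mul_deriv_eq_zero
    (fun y _ ↦ (hψ.differentiable (by norm_num) y).hasDerivAt)
    (fun y hy ↦ hasDerivAt_flux hψ (hG y) (hc y) (heq y hy))
    (integrable hψ'_cont) (integrable (by fun_prop)) hψ₀.left hψ₀.right
  have hψ'_test := integral_conj_deriv_mul_add_conj_mul_deriv_eq_zero
    (fun y _ ↦ hasDerivAt_deriv_iteratedDeriv_two (hψ.of_le (by norm_num)) y)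
    (fun y _ ↦ hasDerivAt_iteratedDeriv hψ (by norm_num) y)
    (integrable hψ''_cont) (integrable hψ'''_cont) hψ₀.deriv_left hψ₀.deriv_right
  rw [← sub_eq_zero, ← sub_eq_zero.2 (hψ'_test.trans hflux_test.symm),
    ← intervalIntegral.integral_sub (integrable (by fun_prop)) (integrable (by fun_prop)),
    ← intervalIntegral.integral_sub (integrable (by fun_prop)) (integrable (by fun_prop))]
  congr 1 with y
  simp only [← conj_mul']
  ring

theorem integral_re_energy_le_of_clamped (hab : a ≤ b) (hψ : ContDiff ℝ 4 ψ)
    (hψ₀ : IsClamped a b ψ) (hG : Differentiable ℝ G) (hc : ∀ y, HasDerivAt c (c' y) y)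
    (hc' : Continuous c') (hq : Continuous q)
    (heq : ∀ y ∈ Set.uIcc a b,
      iteratedDeriv 4 ψ y - c y * iteratedDeriv 2 ψ y + q y * ψ y = deriv G y) :
    ∫ y in a..b, (‖iteratedDeriv 2 ψ y‖ ^ 2 + (c y).re * ‖deriv ψ y‖ ^ 2
        + (q y).re * ‖ψ y‖ ^ 2) ≤
      ∫ y in a..b, (‖c' y‖ * (‖ψ y‖ * ‖deriv ψ y‖) + ‖deriv ψ y‖ * ‖G y‖) := by
  have hG_cont : Continuous G := hG.continuous
  have hc_cont : Continuous c := continuous_iff_continuousAt.2 fun y ↦ (hc y).continuousAt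
  have hψ'_cont : Continuous (deriv ψ) := hψ.continuous_deriv (by norm_num)
  have hψ''_cont := hψ.continuous_iteratedDeriv 2 (by norm_num)
  calc
    _ = (∫ y in a..b, ((‖iteratedDeriv 2 ψ y‖ : ℂ) ^ 2 + c y * (‖deriv ψ y‖ : ℂ) ^ 2
          + q y * (‖ψ y‖ : ℂ) ^ 2)).re := by
      rw [← reCLM_apply, ← reCLM.intervalIntegral_comp_comm
        (Continuous.intervalIntegrable (by fun_prop) a b)]
      simp only [reCLM_apply, add_re, ← ofReal_pow, re_mul_ofReal, ofReal_re]
    _ = (∫ y in a..b, -(c' y * (conj (ψ y) * deriv ψ y) + conj (deriv ψ y) * G y)).re := by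
      rw [integral_energy_eq_of_clamped hψ hψ₀ hG hc hc' hq heq]
    _ ≤ ‖∫ y in a..b, -(c' y * (conj (ψ y) * deriv ψ y) + conj (deriv ψ y) * G y)‖ :=
      re_le_norm _
    _ ≤ _ := by
      refine intervalIntegral.norm_integral_le_of_norm_le hab (ae_of_all _ fun y _ ↦ ?_)
        (Continuous.intervalIntegrable (by fun_prop) a b)
      rw [norm_neg]
      exact (norm_add_le _ _).trans_eq (by simp only [norm_mul, RCLike.norm_conj])

theorem integral_energy_le_of_clamped (hab : a ≤ b) (hψ : ContDiff ℝ 4 ψ)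
    (hψ₀ : IsClamped a b ψ) (hG : Differentiable ℝ G) (hc : ∀ y, HasDerivAt c (c' y) y)
    (hc' : Continuous c') (hq : Continuous q)
    (heq : ∀ y ∈ Set.uIcc a b,
      iteratedDeriv 4 ψ y - c y * iteratedDeriv 2 ψ y + q y * ψ y = deriv G y)
    {γ κ M : ℝ} (hγ : ∀ y ∈ Set.Icc a b, γ ≤ (c y).re) (hκ : ∀ y ∈ Set.Icc a b, κ ≤ (q y).re)
    (hM : ∀ y ∈ Set.Icc a b, ‖c' y‖ ≤ M) :
    (∫ y in a..b, ‖iteratedDeriv 2 ψ y‖ ^ 2) + γ * (∫ y in a..b, ‖deriv ψ y‖ ^ 2)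
        + κ * (∫ y in a..b, ‖ψ y‖ ^ 2) ≤
      M * (∫ y in a..b, ‖ψ y‖ * ‖deriv ψ y‖) + ∫ y in a..b, ‖deriv ψ y‖ * ‖G y‖ := by
  have hG_cont : Continuous G := hG.continuous
  have hc_cont : Continuous c := continuous_iff_continuousAt.2 fun y ↦ (hc y).continuousAt
  have hψ'_cont : Continuous (deriv ψ) := hψ.continuous_deriv (by norm_num)
  have hψ''_cont := hψ.continuous_iteratedDeriv 2 (by norm_num)
  have integrable {f : ℝ → ℝ} (hf : Continuous f) : IntervalIntegrable f volume a b :=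
    hf.intervalIntegrable a b
  calc
    _ = ∫ y in a..b, (‖iteratedDeriv 2 ψ y‖ ^ 2 + γ * ‖deriv ψ y‖ ^ 2 + κ * ‖ψ y‖ ^ 2) := by
      rw [intervalIntegral.integral_add (integrable (by fun_prop)) (integrable (by fun_prop)),
        intervalIntegral.integral_add (integrable (by fun_prop)) (integrable (by fun_prop)),
        intervalIntegral.integral_const_mul, intervalIntegral.integral_const_mul]
    _ ≤ ∫ y in a..b, (‖iteratedDeriv 2 ψ y‖ ^ 2 + (c y).re * ‖deriv ψ y‖ ^ 2
          + (q y).re * ‖ψ y‖ ^ 2) := by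
      refine intervalIntegral.integral_mono_on hab (integrable (by fun_prop))
        (integrable (by fun_prop)) fun y hy ↦ ?_
      gcongr
      exacts [hγ y hy, hκ y hy]
    _ ≤ ∫ y in a..b, (‖c' y‖ * (‖ψ y‖ * ‖deriv ψ y‖) + ‖deriv ψ y‖ * ‖G y‖) :=
      integral_re_energy_le_of_clamped hab hψ hψ₀ hG hc hc' hq heq
    _ ≤ ∫ y in a..b, (M * (‖ψ y‖ * ‖deriv ψ y‖) + ‖deriv ψ y‖ * ‖G y‖) := by
      refine intervalIntegral.integral_mono_on hab (integrable (by fun_prop))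
        (integrable (by fun_prop)) fun y hy ↦ ?_
      gcongr
      exact hM y hy
    _ = _ := by
      rw [intervalIntegral.integral_add (integrable (by fun_prop)) (integrable (by fun_prop)),
        intervalIntegral.integral_const_mul]

end ClampedFourthOrder

/-- `ψ` solves on `[a, b]` the Orr–Sommerfeld equation of the linear shear flow `y`, at Reynolds
number `R`, real wavenumber `k` and spectral parameter `s`, with forcing `F'` and no-slip
boundary conditions. -/
structure IsOrrSommerfeldSolution_s12 (R k : ℝ) (s : ℂ) (a b : ℝ) (F ψ : ℝ → ℂ) : Prop where
  contDiff : ContDiff ℝ 4 ψ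
  clamped : IsClamped a b ψ
  eqn : ∀ y ∈ Set.Icc a b,
    1 / (R : ℂ) * iteratedDeriv 4 ψ y
      - (s + 2 * (k : ℂ) ^ 2 / R + I * k * y) * iteratedDeriv 2 ψ y
      + (s * (k : ℂ) ^ 2 + (k : ℂ) ^ 4 / R + I * (k : ℂ) ^ 3 * y) * ψ y = deriv F y

namespace IsOrrSommerfeldSolution_s12

variable {R k a b : ℝ} {s : ℂ} {F ψ : ℝ → ℂ}

theorem eqn_mul_reynolds (h : IsOrrSommerfeldSolution_s12 R k s a b F ψ) (hR : R ≠ 0) {y : ℝ}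
    (hy : y ∈ Set.Icc a b) :
    iteratedDeriv 4 ψ y - (R * (s + I * k * y) + 2 * k ^ 2) * iteratedDeriv 2 ψ y
      + k ^ 2 * (R * (s + I * k * y) + k ^ 2) * ψ y = R * deriv F y := by
  have hR' : (R : ℂ) ≠ 0 := ofReal_ne_zero.2 hR
  rw [← h.eqn y hy]
  field_simp
  ring

theorem integral_energy_le (h : IsOrrSommerfeldSolution_s12 R k s a b F ψ) (hab : a ≤ b) (hR : 0 < R)
    (hs : 0 ≤ s.re) (hF : Differentiable ℝ F) :
    (∫ y in a..b, ‖iteratedDeriv 2 ψ y‖ ^ 2) + 2 * k ^ 2 * (∫ y in a..b, ‖deriv ψ y‖ ^ 2)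
        + k ^ 4 * (∫ y in a..b, ‖ψ y‖ ^ 2) ≤
      R * |k| * (∫ y in a..b, ‖ψ y‖ * ‖deriv ψ y‖) + R * ∫ y in a..b, ‖deriv ψ y‖ * ‖F y‖ := by
  let c : ℝ → ℂ := fun y ↦ R * (s + I * k * y) + 2 * k ^ 2
  let q : ℝ → ℂ := fun y ↦ k ^ 2 * (R * (s + I * k * y) + k ^ 2)
  have hc (y : ℝ) : HasDerivAt c (R * (I * k)) y := by
    have hy : HasDerivAt (fun y : ℝ ↦ (y : ℂ)) 1 y := ofRealCLM.hasDerivAt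
    simpa only [mul_one] using
      (((hy.const_mul (I * (k : ℂ))).const_add s).const_mul (R : ℂ)).add_const (2 * (k : ℂ) ^ 2)
  have hc_re (y : ℝ) : 2 * k ^ 2 ≤ (c y).re := by
    have : (c y).re = R * s.re + 2 * k ^ 2 := by simp [c, ← ofReal_pow]
    linarith [mul_nonneg hR.le hs]
  have hq_re (y : ℝ) : k ^ 4 ≤ (q y).re := by
    have : (q y).re = k ^ 2 * (R * s.re + k ^ 2) := by simp [q, ← ofReal_pow]
    linarith [mul_nonneg (sq_nonneg k) (mul_nonneg hR.le hs)]
  have hc'_norm : ‖(R * (I * k) : ℂ)‖ = R * |k| := by simp [abs_of_pos hR]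
  have hG_norm (y : ℝ) : ‖deriv ψ y‖ * ‖R * F y‖ = R * (‖deriv ψ y‖ * ‖F y‖) := by
    rw [norm_mul, norm_real, Real.norm_of_nonneg hR.le]
    ring
  have heq (y : ℝ) (hy : y ∈ Set.uIcc a b) :
      iteratedDeriv 4 ψ y - c y * iteratedDeriv 2 ψ y + q y * ψ y
        = deriv (fun y ↦ R * F y) y := by
    rw [deriv_const_mul _ (hF y)]
    exact h.eqn_mul_reynolds hR.ne' (Set.uIcc_of_le hab ▸ hy)
  have energy := integral_energy_le_of_clamped hab h.contDiff h.clamped (hF.const_mul (R : ℂ)) hc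
    continuous_const (by fun_prop) heq (fun y _ ↦ hc_re y) (fun y _ ↦ hq_re y)
    (fun _ _ ↦ hc'_norm.le)
  simpa only [hG_norm, intervalIntegral.integral_const_mul] using energy

theorem integral_energy_le_of_sq_le (h : IsOrrSommerfeldSolution_s12 R k s a b F ψ) (hab : a ≤ b)
    (hR : 0 < R) (hs : 0 ≤ s.re) (hF : Differentiable ℝ F) (hRk : R ^ 2 ≤ 2 * k ^ 4) :
    2 * k ^ 2 * (∫ y in a..b, ‖iteratedDeriv 2 ψ y‖ ^ 2)
        + 2 * k ^ 4 * (∫ y in a..b, ‖deriv ψ y‖ ^ 2) + k ^ 6 * (∫ y in a..b, ‖ψ y‖ ^ 2) ≤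
      2 * k ^ 2 * R * ∫ y in a..b, ‖deriv ψ y‖ * ‖F y‖ := by
  have energy := mul_le_mul_of_nonneg_left (h.integral_energy_le hab hR hs hF) (sq_nonneg k)
  have young := two_mul_mul_integral_norm_mul_norm_le h.contDiff.continuous
    (h.contDiff.continuous_deriv (by norm_num)) hab (k ^ 2 * |k|) R
  have absorb : R ^ 2 * (∫ y in a..b, ‖deriv ψ y‖ ^ 2) ≤
      2 * k ^ 4 * ∫ y in a..b, ‖deriv ψ y‖ ^ 2 := by
    gcongr
    exact intervalIntegral.integral_nonneg hab fun y _ ↦ sq_nonneg ‖deriv ψ y‖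
  rw [mul_pow, sq_abs] at young
  linarith

end IsOrrSommerfeldSolution_s12

theorem sq_le_two_mul_pow_four_of_sqrt_div_sqrt_two_le {R k : ℝ} (hR : 0 ≤ R)
    (hk : √(R / √2) ≤ |k|) : R ^ 2 ≤ 2 * k ^ 4 := by
  have hRk : R / √2 ≤ k ^ 2 := sq_abs k ▸ (Real.sqrt_le_left (abs_nonneg k)).1 hk
  calc
    R ^ 2 = 2 * (R / √2) ^ 2 := by rw [div_pow, Real.sq_sqrt zero_le_two]; ring
    _ ≤ 2 * (k ^ 2) ^ 2 := by gcongr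
    _ = 2 * k ^ 4 := by ring

theorem orr_sommerfeld_estimates_forcing_F_general {R k a b : ℝ} {s : ℂ} {F ψ : ℝ → ℂ}
    (h : IsOrrSommerfeldSolution_s12 R k s a b F ψ) (hab : a ≤ b) (hR : 0 < R) (hs : 0 ≤ s.re)
    (hF : Differentiable ℝ F) (hRk : R ^ 2 ≤ 2 * k ^ 4) :
    k ^ 6 * (∫ y in a..b, ‖ψ y‖ ^ 2) ≤ 2 * R ^ 2 * (∫ y in a..b, ‖F y‖ ^ 2)
      ∧ k ^ 4 * (∫ y in a..b, ‖deriv ψ y‖ ^ 2) ≤ R ^ 2 * (∫ y in a..b, ‖F y‖ ^ 2)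
      ∧ k ^ 2 * (∫ y in a..b, ‖iteratedDeriv 2 ψ y‖ ^ 2) ≤ R ^ 2 * (∫ y in a..b, ‖F y‖ ^ 2) := by
  have energy := h.integral_energy_le_of_sq_le hab hR hs hF hRk
  have young (α : ℝ) := two_mul_mul_integral_norm_mul_norm_le
    (h.contDiff.continuous_deriv (by norm_num)) hF.continuous hab α R
  have integral_sq_nonneg (f : ℝ → ℂ) : 0 ≤ ∫ y in a..b, ‖f y‖ ^ 2 :=
    intervalIntegral.integral_nonneg hab fun y _ ↦ sq_nonneg ‖f y‖
  have hψ_nonneg := mul_nonneg (by positivity : 0 ≤ k ^ 6) (integral_sq_nonneg ψ)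
  have hψ''_nonneg := mul_nonneg (sq_nonneg k) (integral_sq_nonneg (iteratedDeriv 2 ψ))
  have hF_nonneg := mul_nonneg (sq_nonneg R) (integral_sq_nonneg F)
  refine ⟨?_, ?_, ?_⟩
  · linarith [young (2 * k ^ 2)]
  · linarith [young (k ^ 2)]
  · linarith [young (2 * k ^ 2)]

/-- estimates for ψ when |k| > √(R/√2) and I = F'. -/
theorem orr_sommerfeld_estimates_forcing_F
    (R : ℝ) (hR : 0 < R) (k : ℤ) (s : ℂ) (hs : 0 ≤ s.re)
    (ψ : ℝ → ℂ) (hψ : ContDiff ℝ 4 ψ)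
    (hb0 : ψ 0 = 0) (hb1 : ψ 1 = 0) (hb0' : deriv ψ 0 = 0) (hb1' : deriv ψ 1 = 0)
    (F : ℝ → ℂ) (hF : ContDiff ℝ 1 F)
    (heq : ∀ y ∈ Set.Icc (0:ℝ) 1,
      (1/(R:ℂ)) * iteratedDeriv 4 ψ y
        - (s + 2 * (k:ℂ)^2 / (R:ℂ) + Complex.I * (k:ℂ) * (y:ℂ)) * iteratedDeriv 2 ψ y
        + (s * (k:ℂ)^2 + (k:ℂ)^4 / (R:ℂ) + Complex.I * (k:ℂ)^3 * (y:ℂ)) * ψ y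
        = deriv F y)
    (hk : Real.sqrt (R / Real.sqrt 2) < |(k:ℝ)|) :
    (k:ℝ)^6 * l2sq ψ ≤ 2 * R^2 * l2sq F
      ∧ (k:ℝ)^4 * l2sq (deriv ψ) ≤ R^2 * l2sq F
      ∧ (k:ℝ)^2 * l2sq (iteratedDeriv 2 ψ) ≤ R^2 * l2sq F := by
  have hsol : IsOrrSommerfeldSolution_s12 R k s 0 1 F ψ := ⟨hψ, ⟨hb0, hb1, hb0', hb1'⟩, mod_cast heq⟩
  exact orr_sommerfeld_estimates_forcing_F_general hsol zero_le_one hR hs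
    (hF.differentiable one_ne_zero) (sq_le_two_mul_pow_four_of_sqrt_div_sqrt_two_le hR.le hk.le)

end
end

section
/- There exists a constant C₂ > 0, independent of R, k, s, F and G, such that the solution h of the second-order problem satisfies ‖h'‖² + k²·‖h‖² ≤ C₂·R²·(‖F‖² + ‖G‖²). -/
open MeasureTheory Complex

noncomputable section

/-!
Write `ν = 1 / R` and let `p = ν h' - F` be the flux, so that the equation reads
`p' = (c + ν |κ|²) h - κ G` with `κ = i k` and `c = s + i k y`, where `Re c ≥ 0`. Since `h` vanishes
at both endpoints, `∫ Re (⟪h', p⟫ + ⟪h, p'⟫) = 0`. Completing the square bounds `Re ⟪h', ν h' - F⟫`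
below by `ν/2 ‖h'‖² - ‖F‖²/(2ν)`. As `⟪h, ν |κ|² h - κ G⟫ = ⟪κ̄ h, ν κ̄ h - G⟫`, the same inequality
bounds `Re ⟪h, p'⟫` below by `ν/2 |κ|² ‖h‖² - ‖G‖²/(2ν)`. Summing gives the estimate with `C₂ = 1`.
-/

section InnerProductSpace

open Set
open scoped InnerProductSpace ComplexConjugate

variable {𝕜 E : Type*} [RCLike 𝕜] [NormedAddCommGroup E] [InnerProductSpace 𝕜 E] {ν : ℝ}

lemma le_re_inner_smul_sub (hν : 0 < ν) (u f : E) :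
    ν / 2 * ‖u‖ ^ 2 - ‖f‖ ^ 2 / (2 * ν) ≤ RCLike.re ⟪u, (ν : 𝕜) • u - f⟫_𝕜 := by
  have norm_sq : ‖(ν : 𝕜) • u - f‖ ^ 2
      = ν ^ 2 * ‖u‖ ^ 2 - 2 * (ν * RCLike.re ⟪u, f⟫_𝕜) + ‖f‖ ^ 2 := by
    rw [norm_sub_sq (𝕜 := 𝕜), inner_smul_real_left, RCLike.smul_re, norm_smul,
      RCLike.norm_ofReal, mul_pow, sq_abs]
  have re_inner : RCLike.re ⟪u, (ν : 𝕜) • u - f⟫_𝕜 = ν * ‖u‖ ^ 2 - RCLike.re ⟪u, f⟫_𝕜 := by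
    rw [inner_sub_right, map_sub, inner_smul_real_right, RCLike.smul_re,
      inner_self_eq_norm_sq]
  have completed_square : RCLike.re ⟪u, (ν : 𝕜) • u - f⟫_𝕜
      = ν / 2 * ‖u‖ ^ 2 - ‖f‖ ^ 2 / (2 * ν) + ‖(ν : 𝕜) • u - f‖ ^ 2 / (2 * ν) := by
    rw [re_inner, norm_sq]
    field_simp
    ring
  rw [completed_square]
  exact le_add_of_nonneg_right (by positivity)

lemma re_inner_smul_self_nonneg {c : 𝕜} (hc : 0 ≤ RCLike.re c) (u : E) :
    0 ≤ RCLike.re ⟪u, c • u⟫_𝕜 := by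
  rw [inner_smul_right, inner_self_eq_norm_sq_to_K, ← RCLike.ofReal_pow, RCLike.re_mul_ofReal]
  positivity

lemma le_re_inner_add_smul_sub_smul (hν : 0 < ν) {c : 𝕜} (hc : 0 ≤ RCLike.re c) (κ : 𝕜)
    (u g : E) :
    ν / 2 * (‖κ‖ ^ 2 * ‖u‖ ^ 2) - ‖g‖ ^ 2 / (2 * ν)
      ≤ RCLike.re ⟪u, (c + ν * ‖κ‖ ^ 2) • u - κ • g⟫_𝕜 := by
  have move_scalar : ⟪u, (c + ν * ‖κ‖ ^ 2) • u - κ • g⟫_𝕜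
      = ⟪u, c • u⟫_𝕜 + ⟪conj κ • u, (ν : 𝕜) • conj κ • u - g⟫_𝕜 := by
    simp only [add_smul, inner_sub_right, inner_add_right, inner_smul_left, inner_smul_right,
      RCLike.conj_conj, ← RCLike.mul_conj]
    ring
  have square_bound := le_re_inner_smul_sub (𝕜 := 𝕜) hν (conj κ • u) g
  rw [norm_smul, RCLike.norm_conj, mul_pow] at square_bound
  rw [move_scalar, map_add]
  linarith [re_inner_smul_self_nonneg hc u]

variable [NormedSpace ℝ E] {a b : ℝ}

lemma integral_nonpos_of_le_re_inner_deriv (hab : a ≤ b) {u v u' v' : ℝ → E} {φ : ℝ → ℝ}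
    (hu : ContinuousOn u (Icc a b)) (hv : ContinuousOn v (Icc a b))
    (hu' : ∀ y ∈ Ioo a b, HasDerivAt u (u' y) y) (hv' : ∀ y ∈ Ioo a b, HasDerivAt v (v' y) y)
    (ha : u a = 0) (hb : u b = 0) (hφ : IntervalIntegrable φ volume a b)
    (hle : ∀ y ∈ Ioo a b, φ y ≤ RCLike.re (⟪u y, v' y⟫_𝕜 + ⟪u' y, v y⟫_𝕜)) :
    ∫ y in a..b, φ y ≤ 0 := by
  have hderiv : ∀ y ∈ Ioo a b, HasDerivAt (fun t ↦ RCLike.re ⟪u t, v t⟫_𝕜)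
      (RCLike.re (⟪u y, v' y⟫_𝕜 + ⟪u' y, v y⟫_𝕜)) y := fun y hy ↦
    (RCLike.reCLM (K := 𝕜)).hasFDerivAt.comp_hasDerivAt y ((hu' y hy).inner 𝕜 (hv' y hy))
  have hle_sub := intervalIntegral.integral_le_sub_of_hasDeriv_right_of_le hab
    (RCLike.continuous_re.comp_continuousOn (hu.inner hv))
    (fun y hy ↦ (hderiv y hy).hasDerivWithinAt)
    ((intervalIntegrable_iff_integrableOn_Icc_of_le hab).1 hφ) hle
  simpa [ha, hb] using hle_sub

theorem second_order_estimate_general (hab : a ≤ b) (hν : 0 < ν) {κ : 𝕜} {c : ℝ → 𝕜}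
    (hc : ∀ y ∈ Ioo a b, 0 ≤ RCLike.re (c y)) {F F' G h h' h'' : ℝ → E}
    (hF : ContinuousOn F (Icc a b)) (hF' : ∀ y ∈ Ioo a b, HasDerivAt F (F' y) y)
    (hG : IntervalIntegrable (fun y ↦ ‖G y‖ ^ 2) volume a b)
    (hh : ContinuousOn h (Icc a b)) (hh' : ∀ y ∈ Ioo a b, HasDerivAt h (h' y) y)
    (hh'_cont : ContinuousOn h' (Icc a b)) (hh'' : ∀ y ∈ Ioo a b, HasDerivAt h' (h'' y) y)
    (ha : h a = 0) (hb : h b = 0)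
    (heq : ∀ y ∈ Ioo a b,
      (ν : 𝕜) • h'' y - (c y + ν * ‖κ‖ ^ 2) • h y = F' y - κ • G y) :
    (∫ y in a..b, ‖h' y‖ ^ 2) + ‖κ‖ ^ 2 * ∫ y in a..b, ‖h y‖ ^ 2
      ≤ ν⁻¹ ^ 2 * ((∫ y in a..b, ‖F y‖ ^ 2) + ∫ y in a..b, ‖G y‖ ^ 2) := by
  have intervalIntegrable_norm_sq {f : ℝ → E} (hf : ContinuousOn f (Icc a b)) :
      IntervalIntegrable (fun y ↦ ‖f y‖ ^ 2) volume a b :=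
    (hf.norm.pow 2).intervalIntegrable_of_Icc hab
  have hdissipation := (intervalIntegrable_norm_sq hh'_cont).add
    ((intervalIntegrable_norm_sq hh).const_mul (‖κ‖ ^ 2))
  have hforcing := (intervalIntegrable_norm_sq hF).add hG
  have henergy : ∫ y in a..b, (ν / 2 * (‖h' y‖ ^ 2 + ‖κ‖ ^ 2 * ‖h y‖ ^ 2)
      - (2 * ν)⁻¹ * (‖F y‖ ^ 2 + ‖G y‖ ^ 2)) ≤ 0 := by
    refine integral_nonpos_of_le_re_inner_deriv (𝕜 := 𝕜) hab hh
      ((hh'_cont.const_smul (ν : 𝕜)).sub hF) hh'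
      (fun y hy ↦ ((hh'' y hy).const_smul (ν : 𝕜)).sub (hF' y hy)) ha hb
      ((hdissipation.const_mul _).sub (hforcing.const_mul _)) fun y hy ↦ ?_
    have hflux : (ν : 𝕜) • h'' y - F' y = (c y + ν * ‖κ‖ ^ 2) • h y - κ • G y := by
      rw [sub_eq_iff_eq_add.1 (heq y hy)]
      abel
    rw [hflux, map_add]
    linear_combination le_re_inner_smul_sub (𝕜 := 𝕜) hν (h' y) (F y)
      + le_re_inner_add_smul_sub_smul hν (hc y hy) κ (h y) (G y)
  rw [intervalIntegral.integral_sub (hdissipation.const_mul _) (hforcing.const_mul _),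
    intervalIntegral.integral_const_mul, intervalIntegral.integral_const_mul,
    intervalIntegral.integral_add (intervalIntegrable_norm_sq hh'_cont)
      ((intervalIntegrable_norm_sq hh).const_mul _), intervalIntegral.integral_const_mul,
    intervalIntegral.integral_add (intervalIntegrable_norm_sq hF) hG] at henergy
  field_simp at henergy ⊢
  linarith

end InnerProductSpace

/-- estimate for the solution h of the second-order problem. -/
theorem second_order_estimate :
    ∃ C₂ > (0:ℝ), ∀ (R : ℝ), 0 < R → ∀ (k : ℤ), 1 ≤ |k| → ∀ (s : ℂ), 0 ≤ s.re →
    ∀ (F G h : ℝ → ℂ), ContDiff ℝ 1 F → Continuous G → ContDiff ℝ 2 h →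
    h 0 = 0 → h 1 = 0 →
    (∀ y ∈ Set.Icc (0:ℝ) 1,
      (1/(R:ℂ)) * iteratedDeriv 2 h y
        - (s + (k:ℂ)^2 / (R:ℂ) + Complex.I * (k:ℂ) * (y:ℂ)) * h y
        = deriv F y - Complex.I * (k:ℂ) * G y) →
    l2sq (deriv h) + (k:ℝ)^2 * l2sq h ≤ C₂ * R^2 * (l2sq F + l2sq G) := by
  refine ⟨1, one_pos, fun R hR k _ s hs F G h hF hG hh h0 h1 heq ↦ ?_⟩
  have norm_sq : (‖I * (k : ℂ)‖ : ℂ) ^ 2 = (k : ℂ) ^ 2 := by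
    rw [norm_mul, norm_I, one_mul, norm_intCast, ← ofReal_pow, sq_abs]
    push_cast
    rfl
  have equation : ∀ y ∈ Set.Ioo (0 : ℝ) 1, ((R⁻¹ : ℝ) : ℂ) • deriv (deriv h) y
      - ((s + I * k * y) + (R⁻¹ : ℝ) * ‖I * (k : ℂ)‖ ^ 2) • h y
        = deriv F y - (I * k) • G y := fun y hy ↦ by
    have hode := heq y (Set.Ioo_subset_Icc_self hy)
    rw [iteratedDeriv_succ, iteratedDeriv_one] at hode
    rw [norm_sq, ofReal_inv, smul_eq_mul, smul_eq_mul, smul_eq_mul]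
    linear_combination hode
  simpa [l2sq] using second_order_estimate_general zero_le_one (inv_pos.2 hR)
    (fun y _ ↦ by simpa using hs) hF.continuous.continuousOn
    (fun y _ ↦ (hF.differentiable one_ne_zero y).hasDerivAt)
    ((hG.norm.pow 2).intervalIntegrable 0 1) hh.continuous.continuousOn
    (fun y _ ↦ (hh.differentiable two_ne_zero y).hasDerivAt)
    (hh.continuous_deriv one_le_two).continuousOn
    (fun y _ ↦ (hh.differentiable_deriv_two y).hasDerivAt) h0 h1 equation

end
end
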